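/- Let m ≥ 1 and k ≥ 2 be integers, and assume that G is a graph whose complement is K_k^m-free. Then G contains a collection of at most k − 1 vertex-disjoint cycles covering all but at most 2k^2·m + k^3 vertices. -/

import Mathlib

/-- `G` contains a (not necessarily induced) copy of `H`. -/
def ContainsCopy {α β : Type*} (H : SimpleGraph α) (G : SimpleGraph β) : Prop :=
  ∃ f : α → β, Function.Injective f ∧ ∀ a b, H.Adj a b → G.Adj (f a) (f b)

/-- `S` is the vertex set of a cycle in `G`; single vertices and single edges count as
degenerate cycles. -/
def IsCycleSet {V : Type*} (G : SimpleGraph V) (S : Set V) : Prop :=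
  (∃ v, S = {v}) ∨
  (∃ u v, G.Adj u v ∧ S = {u, v}) ∨
  (∃ (v : V) (w : G.Walk v v), w.IsCycle ∧ S = {x | x ∈ w.support})

/-!
Run a depth-first search until exactly `2km` vertices are finished, and let `D` be the set of these
vertices; if there are fewer than `2km` vertices in all, no cycle is needed. The stack is then a
path of `G` that separates `D` from the unvisited vertices.

As `Gᶜ[D]` is `K_k^m`-free, some `X ⊆ D` of at least `m` vertices is connected in `G`. Indeed,
splitting `D` along missing edges as long as a part of at least `m` vertices remains ends with such
an `X`, or with a part of fewer than `2m` vertices. In the latter case put this part aside and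
continue with the rest of `D`; `k` parts put aside would span a `K_k^m` in `Gᶜ`.

The segment of the stack between its first and last neighbours of `X`, closed up by a path inside
`X`, is a cycle `C`; if `X` has no neighbour on the stack, let `C` be a single vertex of `X`. No
unfinished vertex outside `C` has a neighbour in `X`, so the complement is `K_{k-1}^m`-free on these
vertices, and induction applies. In total the sets `D` contain at most
`2m(k + (k - 1) + ⋯ + 1) = k(k + 1)m` vertices.
-/

section Multipartite

open SimpleGraph

theorem containsCopy_iff_isContained {α β : Type*} {H : SimpleGraph α} {G : SimpleGraph β} :
    ContainsCopy H G ↔ H ⊑ G :=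
  ⟨fun ⟨f, hf, hadj⟩ => ⟨⟨⟨f, hadj _ _⟩, hf⟩⟩,
    fun ⟨f⟩ => ⟨f, f.injective, fun _ _ => f.toHom.map_adj⟩⟩

variable {V : Type*} {H : SimpleGraph V} {k m : ℕ}

theorem free_completeEquipartiteGraph_induce_mono {W W' : Set V} (hW : W' ⊆ W)
    (hfree : (completeEquipartiteGraph k m).Free (H.induce W)) :
    (completeEquipartiteGraph k m).Free (H.induce W') :=
  fun h => hfree (h.trans ⟨(induceHomOfLE H hW).toCopy⟩)

theorem completeEquipartiteGraph_succ_isContained_induce {A : Finset V} {W W' : Set V}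
    (hA : m ≤ A.card) (hAW : ↑A ⊆ W) (hW : W' ⊆ W) (hadj : H.IsCompleteBetween A W')
    (hW' : completeEquipartiteGraph k m ⊑ H.induce W') :
    completeEquipartiteGraph (k + 1) m ⊑ H.induce W := by
  obtain ⟨f⟩ := hW'
  obtain ⟨g⟩ : Nonempty (Fin m ↪ A) :=
    Function.Embedding.nonempty_of_card_le (by simpa using hA)
  let F : Fin (k + 1) × Fin m → W := fun p =>
    Fin.cases ⟨g p.2, hAW (g p.2).2⟩ (fun i => ⟨f (i, p.2), hW (f (i, p.2)).2⟩) p.1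
  have F_adj : ∀ {p q}, (completeEquipartiteGraph (k + 1) m).Adj p q →
      (H.induce W).Adj (F p) (F q) := by
    rintro ⟨i, a⟩ ⟨j, b⟩ hij
    rw [completeEquipartiteGraph_adj] at hij
    cases i using Fin.cases with
    | zero =>
      cases j using Fin.cases with
      | zero => exact absurd rfl hij
      | succ j => exact hadj (g a).2 (f (j, b)).2
    | succ i =>
      cases j using Fin.cases with
      | zero => exact (hadj (g b).2 (f (i, a)).2).symm
      | succ j =>
        exact f.toHom.map_adj (completeEquipartiteGraph_adj.2 fun h => hij (congrArg Fin.succ h))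
  have F_injective : F.Injective := by
    rintro ⟨i, a⟩ ⟨j, b⟩ hF
    obtain rfl : i = j := by
      by_contra hij
      exact (F_adj (completeEquipartiteGraph_adj.2 hij)).ne hF
    cases i using Fin.cases with
    | zero =>
      have hg : (g a : V) = g b := congrArg (fun x : W => (x : V)) hF
      rw [g.injective (Subtype.ext hg)]
    | succ i =>
      have hf : (f (i, a) : V) = f (i, b) := congrArg (fun x : W => (x : V)) hF
      obtain rfl : a = b := (Prod.ext_iff.1 (f.injective (Subtype.ext hf))).2
      rfl
  exact ⟨⟨⟨F, F_adj⟩, F_injective⟩⟩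

end Multipartite

section Separation

open SimpleGraph

variable {V : Type*} {G H : SimpleGraph V} {k m : ℕ}

theorem isCompleteBetween_sdiff_trans {X Y D : Set V} (hX : H.IsCompleteBetween X (Y \ X))
    (hXY : X ⊆ Y) (hY : H.IsCompleteBetween Y (D \ Y)) : H.IsCompleteBetween X (D \ X) := by
  intro x hx d hd
  by_cases hdY : d ∈ Y
  · exact hX hx ⟨hdY, hd.2⟩
  · exact hY (hXY hx) ⟨hd.1, hdY⟩

theorem isCompleteBetween_sdiff_sdiff {X D : Set V} (hX : H.IsCompleteBetween X (D \ X)) :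
    H.IsCompleteBetween (D \ X) (D \ (D \ X)) :=
  fun _ hd _ hx => (hX (by_contra fun h => hx.2 ⟨hx.1, h⟩) hd).symm

theorem exists_ssubset_isCompleteBetween_compl {D : Set V} (hD : ¬ (G.induce D).Preconnected) :
    ∃ X ⊂ D, X.Nonempty ∧ Gᶜ.IsCompleteBetween X (D \ X) := by
  obtain ⟨a, b, hab⟩ : ∃ a b, ¬ (G.induce D).Reachable a b := by
    simpa only [Preconnected, not_forall] using hD
  refine ⟨Subtype.val '' {x | (G.induce D).Reachable a x}, ⟨?_, ?_⟩, ⟨a, ⟨a, .rfl, rfl⟩⟩, ?_⟩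
  · rintro _ ⟨x, -, rfl⟩
    exact x.2
  · intro hsub
    obtain ⟨x, hx, hxb⟩ := hsub b.2
    exact hab (Subtype.ext hxb ▸ hx)
  · rintro _ ⟨x, hx, rfl⟩ d ⟨hdD, hd⟩
    have hdx : ¬ (G.induce D).Reachable a ⟨d, hdD⟩ := fun h => hd ⟨_, h, rfl⟩
    refine (compl_adj ..).2 ⟨?_, fun hxd => ?_⟩
    · rintro rfl
      exact hdx hx
    · have hadj : (G.induce D).Adj x ⟨d, hdD⟩ := hxd
      exact hdx (hx.trans hadj.reachable)

theorem exists_subset_preconnected_or_card_lt (D : Finset V) (hD : m ≤ D.card) :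
    ∃ X ⊆ D, m ≤ X.card ∧ Gᶜ.IsCompleteBetween X (D \ X) ∧
      ((G.induce (X : Set V)).Preconnected ∨ X.card < 2 * m) := by
  classical
  induction D using Finset.strongInduction with
  | H D ih =>
  by_cases hconn : (G.induce (D : Set V)).Preconnected
  · exact ⟨D, subset_rfl, hD, by simp [IsCompleteBetween], .inl hconn⟩
  by_cases hlt : D.card < 2 * m
  · exact ⟨D, subset_rfl, hD, by simp [IsCompleteBetween], .inr hlt⟩
  obtain ⟨Y, hYD, hYne, hY⟩ := exists_ssubset_isCompleteBetween_compl hconn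
  lift Y to Finset V using D.finite_toSet.subset hYD.subset
  rw [Finset.coe_ssubset] at hYD
  have descend : ∀ Z ⊂ D, m ≤ Z.card → Gᶜ.IsCompleteBetween Z (D \ Z) →
      ∃ X ⊆ D, m ≤ X.card ∧ Gᶜ.IsCompleteBetween X (D \ X) ∧
        ((G.induce (X : Set V)).Preconnected ∨ X.card < 2 * m) := by
    intro Z hZD hZ hZsep
    obtain ⟨X, hXZ, hX, hXsep, hXor⟩ := ih Z hZD hZ
    exact ⟨X, hXZ.trans hZD.subset, hX,
      isCompleteBetween_sdiff_trans hXsep (Finset.coe_subset.2 hXZ) hZsep, hXor⟩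
  have hcard := Finset.card_sdiff_add_card_eq_card hYD.subset
  obtain hYm | hYm : m ≤ Y.card ∨ m ≤ (D \ Y).card := by lia
  · exact descend Y hYD hYm hY
  · refine descend (D \ Y) (Finset.sdiff_ssubset hYD.subset (by simpa using hYne)) hYm ?_
    rw [Finset.coe_sdiff]
    exact isCompleteBetween_sdiff_sdiff hY

theorem exists_subset_preconnected_of_free (D : Finset V) (hD : 2 * k * m ≤ D.card)
    (hfree : (completeEquipartiteGraph k m).Free (Gᶜ.induce (D : Set V))) :
    ∃ X ⊆ D, m ≤ X.card ∧ (G.induce (X : Set V)).Preconnected := by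
  classical
  induction k generalizing D with
  | zero => exact absurd .of_isEmpty hfree
  | succ k ih =>
    rw [mul_add_one, add_mul] at hD
    obtain ⟨X, hXD, hX, hXsep, hXconn | hXlt⟩ :=
      exists_subset_preconnected_or_card_lt (G := G) (m := m) D (by lia)
    · exact ⟨X, hXD, hX, hXconn⟩
    have hcard := Finset.card_sdiff_add_card_eq_card hXD
    obtain ⟨Y, hYD, hY, hYconn⟩ := ih (D \ X) (by lia) fun hcopy =>
      hfree (completeEquipartiteGraph_succ_isContained_induce hX (Finset.coe_subset.2 hXD)
        (Finset.coe_subset.2 Finset.sdiff_subset) (by simpa using hXsep) hcopy)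
    exact ⟨Y, hYD.trans Finset.sdiff_subset, hY, hYconn⟩

end Separation

section Cycles

open SimpleGraph

variable {V : Type*} {G : SimpleGraph V}

theorem IsCycleSet.of_isPath {u v : V} {p : G.Walk u v} (hp : p.IsPath) (hvu : G.Adj v u) :
    IsCycleSet G {x | x ∈ p.support} := by
  by_cases he : s(v, u) ∈ p.edges
  · have hlen : p.length = 1 := hp.length_eq_one_of_mem_edges (by rwa [Sym2.eq_swap])
    cases p with
    | nil => simp at hlen
    | cons huw p =>
      cases p with
      | nil => exact .inr (.inl ⟨_, _, huw, by ext; simp⟩)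
      | cons => simp at hlen
  · refine .inr (.inr ⟨v, .cons hvu p, (p.cons_isCycle_iff hvu).2 ⟨hp, he⟩, ?_⟩)
    ext x
    simp +contextual [or_iff_right_of_imp]

theorem IsCycleSet.of_isChain {l : List V} (hne : l ≠ []) (hl : l.IsChain G.Adj)
    (hnd : l.Nodup) (hclose : G.Adj (l.getLast hne) (l.head hne)) : IsCycleSet G {x | x ∈ l} := by
  have hpath : (Walk.ofSupport l hne hl).IsPath := by
    rwa [Walk.isPath_def, Walk.support_ofSupport]
  simpa only [Walk.support_ofSupport] using of_isPath hpath hclose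

theorem exists_infix_head_getLast {α : Type*} (p : α → Prop) {l : List α} (hl : ∃ x ∈ l, p x) :
    ∃ (l' : List α) (hne : l' ≠ []), l' <:+: l ∧ p (l'.head hne) ∧ p (l'.getLast hne) ∧
      ∀ x ∈ l, p x → x ∈ l' := by
  classical
  let tail := l.dropWhile (!p ·)
  let core := tail.rdropWhile (!p ·)
  have mem_core : ∀ x ∈ l, p x → x ∈ core := by
    intro x hx hpx
    rw [← List.takeWhile_append_dropWhile (p := (!p ·)) (l := l), List.mem_append] at hx
    have hxs : x ∈ tail := hx.resolve_left fun h => by simpa [hpx] using List.mem_takeWhile_imp h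
    rw [← List.rdropWhile_append_rtakeWhile (p := (!p ·)) (l := tail), List.mem_append] at hxs
    exact hxs.resolve_right fun h => by simpa [hpx] using List.mem_rtakeWhile_imp h
  obtain ⟨x, hx, hpx⟩ := hl
  have hne : core ≠ [] := List.ne_nil_of_mem (mem_core x hx hpx)
  have hcore : core <+: tail := List.rdropWhile_prefix ..
  refine ⟨core, hne, hcore.isInfix.trans (List.dropWhile_suffix _).isInfix, ?_, ?_, mem_core⟩
  · rw [hcore.head hne]
    simpa using List.head_dropWhile_not (!p ·) (hcore.ne_nil hne)
  · simpa using List.rdropWhile_last_not (!p ·) tail hne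

theorem exists_isCycleSet_of_connected_induce {S : Set V} (hS : (G.induce S).Connected)
    {l : List V} (hl : l.IsChain G.Adj) (hnd : l.Nodup) (hlS : ∀ x ∈ l, x ∉ S) :
    ∃ C, IsCycleSet G C ∧ C ⊆ S ∪ {x | x ∈ l} ∧ Gᶜ.IsCompleteBetween S ({x | x ∈ l} \ C) := by
  have compl_adj_of_not_adj : ∀ {s x}, s ∈ S → x ∈ l → ¬ G.Adj s x → Gᶜ.Adj s x :=
    fun hs hx h => (compl_adj ..).2 ⟨fun hsx => hlS _ hx (hsx ▸ hs), h⟩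
  by_cases hnbr : ∃ x ∈ l, ∃ s ∈ S, G.Adj s x
  swap
  · obtain ⟨s₀⟩ := hS.nonempty
    refine ⟨{s₀.1}, .inl ⟨s₀, rfl⟩, by simp, fun s hs x hx => ?_⟩
    exact compl_adj_of_not_adj hs hx.1 fun h => hnbr ⟨x, hx.1, s, hs, h⟩
  obtain ⟨l', hne, hseg, ⟨s, hs, hsx⟩, ⟨t, ht, hty⟩, hmem⟩ := exists_infix_head_getLast _ hnbr
  obtain ⟨q, hq, hqS⟩ : ∃ q : G.Walk t s, q.IsPath ∧ ∀ v ∈ q.support, v ∈ S := by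
    obtain ⟨q, hq⟩ := (hS ⟨t, ht⟩ ⟨s, hs⟩).exists_isPath
    refine ⟨q.map (Embedding.induce S).toHom, hq.map Subtype.val_injective, fun v hv => ?_⟩
    obtain ⟨x, -, rfl⟩ := List.mem_map.1 (q.support_map _ ▸ hv)
    exact x.2
  refine ⟨{x | x ∈ l' ++ q.support}, .of_isChain (by simp [hne]) ?_ ?_ ?_, ?_, ?_⟩
  · refine (hl.infix hseg).append q.isChain_adj_support ?_
    simpa [List.getLast?_eq_some_getLast hne, List.head?_eq_some_head q.support_ne_nil]
      using hty.symm
  · refine (hnd.sublist hseg.sublist).append hq.support_nodup fun x hxl' hxq => ?_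
    exact hlS x (hseg.subset hxl') (hqS x hxq)
  · simpa [hne] using hsx
  · intro x hx
    exact (List.mem_append.1 hx).symm.imp (hqS x) (hseg.subset ·)
  · rintro a ha x ⟨hx, hxC⟩
    refine compl_adj_of_not_adj ha hx fun hax => hxC ?_
    exact List.mem_append_left _ (hmem x hx ⟨a, ha, hax⟩)

end Cycles

section DepthFirstSearch

open SimpleGraph

variable {V : Type*} {G : SimpleGraph V} {W D : Finset V} {l : List V}

/-- A state of depth-first search in `G[W]`: `D` is the set of finished vertices, and the stack
`l` is a path with its current end first. The remaining vertices of `W` are unvisited. -/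
structure IsDFSState (G : SimpleGraph V) (W D : Finset V) (l : List V) : Prop where
  finished_subset : D ⊆ W
  isChain : l.IsChain G.Adj
  nodup : l.Nodup
  mem_of_mem_stack : ∀ x ∈ l, x ∈ W
  notMem_finished_of_mem_stack : ∀ x ∈ l, x ∉ D
  isCompleteBetween : Gᶜ.IsCompleteBetween D {x ∈ W | x ∉ D ∧ x ∉ l}

namespace IsDFSState

theorem empty : IsDFSState G W ∅ [] := by
  constructor <;> simp [IsCompleteBetween]

theorem push {u : V} (h : IsDFSState G W D l) (huW : u ∈ W) (huD : u ∉ D) (hul : u ∉ l)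
    (hu : (u :: l).IsChain G.Adj) : IsDFSState G W D (u :: l) where
  finished_subset := h.finished_subset
  isChain := hu
  nodup := List.nodup_cons.2 ⟨hul, h.nodup⟩
  mem_of_mem_stack := List.forall_mem_cons.2 ⟨huW, h.mem_of_mem_stack⟩
  notMem_finished_of_mem_stack := List.forall_mem_cons.2 ⟨huD, h.notMem_finished_of_mem_stack⟩
  isCompleteBetween _ hd _ hx :=
    h.isCompleteBetween hd ⟨hx.1, hx.2.1, fun hxl => hx.2.2 (List.mem_cons_of_mem u hxl)⟩

theorem pop [DecidableEq V] {v : V} (h : IsDFSState G W D (v :: l))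
    (hv : ∀ x ∈ W, x ∉ D → x ∉ v :: l → ¬ G.Adj v x) : IsDFSState G W (insert v D) l where
  finished_subset := Finset.insert_subset (h.mem_of_mem_stack v List.mem_cons_self)
    h.finished_subset
  isChain := h.isChain.tail
  nodup := h.nodup.of_cons
  mem_of_mem_stack := (List.forall_mem_cons.1 h.mem_of_mem_stack).2
  notMem_finished_of_mem_stack x hx hxD := by
    obtain rfl | hxD := Finset.mem_insert.1 hxD
    · exact (List.nodup_cons.1 h.nodup).1 hx
    · exact h.notMem_finished_of_mem_stack x (List.mem_cons_of_mem v hx) hxD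
  isCompleteBetween := by
    rintro d hd x ⟨hxW, hxD, hxl⟩
    rw [Finset.mem_insert, not_or] at hxD
    have hxvl : x ∉ v :: l := by simp [hxD.1, hxl]
    obtain rfl | hdD := Finset.mem_insert.1 hd
    · exact (compl_adj ..).2 ⟨Ne.symm hxD.1, hv x hxW hxD.2 hxvl⟩
    · exact h.isCompleteBetween hdD ⟨hxW, hxD.2, hxvl⟩

theorem card_add_length_le (h : IsDFSState G W D l) : D.card + l.length ≤ W.card := by
  classical
  have hdisj : Disjoint D l.toFinset :=
    Finset.disjoint_right.2 fun x hx => h.notMem_finished_of_mem_stack x (List.mem_toFinset.1 hx)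
  have hsub : D ∪ l.toFinset ⊆ W := Finset.union_subset h.finished_subset fun x hx =>
    h.mem_of_mem_stack x (List.mem_toFinset.1 hx)
  rw [← List.toFinset_card_of_nodup h.nodup, ← Finset.card_union_of_disjoint hdisj]
  exact Finset.card_le_card hsub

theorem exists_card_finished_succ {l : List V} (h : IsDFSState G W D l) (hD : D.card < W.card) :
    ∃ D' l', D'.card = D.card + 1 ∧ IsDFSState G W D' l' := by
  classical
  by_cases hpush : ∃ u ∈ W, u ∉ D ∧ u ∉ l ∧ (u :: l).IsChain G.Adj
  · obtain ⟨u, huW, huD, hul, hu⟩ := hpush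
    have h' := h.push huW huD hul hu
    have := h'.card_add_length_le
    exact h'.exists_card_finished_succ hD
  cases l with
  | nil =>
    obtain ⟨u, huW, huD⟩ := Finset.exists_mem_notMem_of_card_lt_card hD
    exact absurd ⟨u, huW, huD, List.not_mem_nil, .singleton u⟩ hpush
  | cons v l =>
    have hvD : v ∉ D := h.notMem_finished_of_mem_stack v List.mem_cons_self
    refine ⟨insert v D, l, Finset.card_insert_of_notMem hvD, h.pop fun x hxW hxD hxl hvx => ?_⟩
    exact hpush ⟨x, hxW, hxD, hxl, h.isChain.cons_cons hvx.symm⟩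
termination_by W.card - l.length
decreasing_by grind

theorem exists_card_finished_eq (G : SimpleGraph V) {n : ℕ} (hn : n ≤ W.card) :
    ∃ D l, D.card = n ∧ IsDFSState G W D l := by
  induction n with
  | zero => exact ⟨∅, [], rfl, .empty⟩
  | succ n ih =>
    obtain ⟨D, l, rfl, h⟩ := ih (by lia)
    exact h.exists_card_finished_succ hn

end IsDFSState

end DepthFirstSearch

section Cover

open SimpleGraph

variable {V : Type*} {G : SimpleGraph V} {k m : ℕ}

theorem exists_isCycleSet_and_free (hm : 1 ≤ m) {W : Finset V} (hW : 2 * (k + 1) * m ≤ W.card)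
    (hfree : (completeEquipartiteGraph (k + 1) m).Free (Gᶜ.induce (W : Set V))) :
    ∃ (D W' : Finset V) (C : Set V), D.card = 2 * (k + 1) * m ∧ IsCycleSet G C ∧ C ⊆ W ∧
      W' ⊆ W ∧ Disjoint C W' ∧ (W : Set V) ⊆ D ∪ C ∪ W' ∧
      (completeEquipartiteGraph k m).Free (Gᶜ.induce (W' : Set V)) := by
  classical
  obtain ⟨D, l, hDcard, hdfs⟩ := IsDFSState.exists_card_finished_eq G hW
  have hDW : (D : Set V) ⊆ W := Finset.coe_subset.2 hdfs.finished_subset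
  obtain ⟨S, hSD, hSm, hSconn⟩ := exists_subset_preconnected_of_free D hDcard.ge
    (free_completeEquipartiteGraph_induce_mono hDW hfree)
  have hSD' : (S : Set V) ⊆ D := Finset.coe_subset.2 hSD
  obtain ⟨s, hs⟩ : S.Nonempty := Finset.card_pos.1 (by lia)
  obtain ⟨C, hC, hCsub, hCsep⟩ := exists_isCycleSet_of_connected_induce
    (S := S) ((connected_iff _).2 ⟨hSconn, ⟨s, hs⟩⟩) hdfs.isChain hdfs.nodup
    (fun x hx hxS => hdfs.notMem_finished_of_mem_stack x hx (hSD hxS))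
  have hadj : Gᶜ.IsCompleteBetween S {x ∈ W | x ∉ D ∧ x ∉ C} := by
    rintro a ha x ⟨hxW, hxD, hxC⟩
    by_cases hxl : x ∈ l
    · exact hCsep ha ⟨hxl, hxC⟩
    · exact hdfs.isCompleteBetween (hSD ha) ⟨hxW, hxD, hxl⟩
  refine ⟨D, {x ∈ W | x ∉ D ∧ x ∉ C}, C, hDcard, hC, ?_, Finset.filter_subset .., ?_, ?_, ?_⟩
  · exact hCsub.trans (Set.union_subset (hSD'.trans hDW) hdfs.mem_of_mem_stack)
  · exact Set.disjoint_left.2 fun x hxC hx => (Finset.mem_filter.1 hx).2.2 hxC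
  · intro x hx
    simp only [Set.mem_union, Finset.mem_coe, Finset.mem_filter] at hx ⊢
    tauto
  · exact fun hcopy => hfree (completeEquipartiteGraph_succ_isContained_induce hSm
      (hSD'.trans hDW) (Finset.coe_subset.2 (Finset.filter_subset ..)) (by simpa using hadj) hcopy)

theorem exists_pairwise_disjoint_isCycleSet_cover (hm : 1 ≤ m) (W : Finset V)
    (hfree : (completeEquipartiteGraph k m).Free (Gᶜ.induce (W : Set V))) :
    ∃ 𝒞 : Finset (Set V), 𝒞.card < k ∧ (𝒞 : Set (Set V)).Pairwise Disjoint ∧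
      (∀ S ∈ 𝒞, IsCycleSet G S) ∧ (∀ S ∈ 𝒞, S ⊆ W) ∧
      ((W : Set V) \ ⋃₀ 𝒞).ncard ≤ k * (k + 1) * m := by
  classical
  induction k generalizing W with
  | zero => exact absurd .of_isEmpty hfree
  | succ k ih =>
    obtain hW | hW := lt_or_ge W.card (2 * (k + 1) * m)
    · refine ⟨∅, by simp, by simp, by simp, by simp, ?_⟩
      simp only [Finset.coe_empty, Set.sUnion_empty, Set.sdiff_empty, Set.ncard_coe_finset]
      nlinarith
    obtain ⟨D, W', C, hD, hC, hCW, hW'W, hCW', hcover, hfree'⟩ :=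
      exists_isCycleSet_and_free hm hW hfree
    obtain ⟨𝒞, hcard, hdisj, hcycle, hsub, hrest⟩ := ih W' hfree'
    have hCdisj : ∀ S ∈ 𝒞, Disjoint C S := fun S hS => hCW'.mono_right (hsub S hS)
    refine ⟨insert C 𝒞, (Finset.card_insert_le _ _).trans_lt (by lia), ?_, ?_, ?_, ?_⟩
    · rw [Finset.coe_insert]
      exact hdisj.insert_of_symm fun S hS _ => hCdisj S hS
    · exact (Finset.forall_mem_insert ..).2 ⟨hC, hcycle⟩
    · exact (Finset.forall_mem_insert ..).2
        ⟨hCW, fun S hS => (hsub S hS).trans (Finset.coe_subset.2 hW'W)⟩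
    · have hrem : (W : Set V) \ ⋃₀ ↑(insert C 𝒞) ⊆ ↑D ∪ (↑W' \ ⋃₀ ↑𝒞) := by
        rw [Finset.coe_insert, Set.sUnion_insert]
        rintro x ⟨hxW, hx⟩
        rw [Set.mem_union, not_or] at hx
        obtain (hxD | hxC) | hxW' := hcover hxW
        · exact .inl hxD
        · exact absurd hxC hx.1
        · exact .inr ⟨hxW', hx.2⟩
      calc ((W : Set V) \ ⋃₀ ↑(insert C 𝒞)).ncard
          ≤ (↑D ∪ (↑W' \ ⋃₀ ↑𝒞) : Set V).ncard := Set.ncard_le_ncard hrem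
        _ ≤ D.card + (↑W' \ ⋃₀ ↑𝒞 : Set V).ncard := by
          simpa using Set.ncard_union_le (D : Set V) (↑W' \ ⋃₀ ↑𝒞)
        _ ≤ 2 * (k + 1) * m + k * (k + 1) * m := by lia
        _ = (k + 1) * (k + 1 + 1) * m := by ring

end Cover

/-- Let `m ≥ 1`, `k ≥ 2` be integers, and let `G` be a graph whose complement
contains no copy of the complete `k`-partite graph `K_k^m` with parts of size `m`. Then `G`
contains at most `k - 1` vertex-disjoint cycles covering all but at most `2k^2 m + k^3`
vertices. -/
theorem stmt3 {V : Type*} [Fintype V] (m k : ℕ) (hm : 1 ≤ m) (hk : 2 ≤ k)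
    (G : SimpleGraph V)
    (hfree : ¬ ContainsCopy (SimpleGraph.completeMultipartiteGraph fun _ : Fin k => Fin m) Gᶜ) :
    ∃ 𝒞 : Finset (Set V),
      𝒞.card ≤ k - 1 ∧
      (𝒞 : Set (Set V)).Pairwise Disjoint ∧
      (∀ S ∈ 𝒞, IsCycleSet G S) ∧
      (Set.univ \ ⋃₀ (𝒞 : Set (Set V))).ncard ≤ 2 * k ^ 2 * m + k ^ 3 := by
  have hfree' : (SimpleGraph.completeEquipartiteGraph k m).Free
      (Gᶜ.induce ((Finset.univ : Finset V) : Set V)) := fun hcopy =>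
    hfree <| containsCopy_iff_isContained.2 <|
      SimpleGraph.completeEquipartiteGraph.completeMultipartiteGraph.symm.toCopy.isContained.trans
        (hcopy.trans ⟨.induce _ _⟩)
  obtain ⟨𝒞, hcard, hdisj, hcycle, -, hrest⟩ :=
    exists_pairwise_disjoint_isCycleSet_cover hm Finset.univ hfree'
  refine ⟨𝒞, by lia, hdisj, hcycle, ?_⟩
  calc (Set.univ \ ⋃₀ (𝒞 : Set (Set V))).ncard ≤ k * (k + 1) * m := by simpa using hrest
    _ ≤ 2 * k ^ 2 * m + k ^ 3 := by nlinarith
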